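/- For a function f : ℤⁿ → ℝ ∪ {+∞}, the following are equivalent: (a) f is integrally convex; (b) for every x, y ∈ dom f with ‖x − y‖∞ ≥ 2, one has f(x) + f(y) ≥ 2·f̃((x+y)/2), where f̃ is the local convex envelope of f. -/

import Mathlib

/-- The ℓ∞-norm of an integer vector, as a natural number. -/
def linf {n : ℕ} (z : Fin n → ℤ) : ℕ :=
  Finset.univ.sup fun i => (z i).natAbs

/-- Componentwise round-up of (x+y)/2. -/
def avgUp {n : ℕ} (x y : Fin n → ℤ) : Fin n → ℤ :=
  fun i => ⌈((x i + y i : ℚ)) / 2⌉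

/-- Componentwise round-down of (x+y)/2. -/
def avgDown {n : ℕ} (x y : Fin n → ℤ) : Fin n → ℤ :=
  fun i => ⌊((x i + y i : ℚ)) / 2⌋

/-- A set `S ⊆ ℤⁿ` is discrete midpoint convex. -/
def DMCSet {n : ℕ} (S : Set (Fin n → ℤ)) : Prop :=
  ∀ ⦃x⦄, x ∈ S → ∀ ⦃y⦄, y ∈ S → 2 ≤ linf (x - y) →
    avgUp x y ∈ S ∧ avgDown x y ∈ S

/-- `f` satisfies discrete midpoint convexity for the pair `(x, y)`.
Values are in `ℝ ∪ {+∞}`, modeled as `EReal` together with the hypothesis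
that `f` never takes the value `⊥`. -/
def DMCPair {n : ℕ} (f : (Fin n → ℤ) → EReal) (x y : Fin n → ℤ) : Prop :=
  f (avgUp x y) + f (avgDown x y) ≤ f x + f y

/-- `f` is globally discrete midpoint convex. -/
def GloballyDMC {n : ℕ} (f : (Fin n → ℤ) → EReal) : Prop :=
  ∀ x y : Fin n → ℤ, 2 ≤ linf (x - y) → DMCPair f x y

/-- The effective domain of `f`. -/
def effDom {n : ℕ} (f : (Fin n → ℤ) → EReal) : Set (Fin n → ℤ) :=
  {x | f x ≠ ⊤}

/-- `f` is locally discrete midpoint convex. -/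
def LocallyDMC {n : ℕ} (f : (Fin n → ℤ) → EReal) : Prop :=
  DMCSet (effDom f) ∧ ∀ x y : Fin n → ℤ, linf (x - y) = 2 → DMCPair f x y

/-- The integral neighborhood of a real point. -/
def intNbhd {n : ℕ} (x : Fin n → ℝ) : Set (Fin n → ℤ) :=
  {z | ∀ i, |x i - (z i : ℝ)| < 1}

/-- The local convex envelope `f̃` of `f`: at `x ∈ ℝⁿ`, the infimum of
`Σ_z λ_z f(z)` over convex combinations `x = Σ_z λ_z z` of points `z` of the
integral neighborhood `N(x)`. -/
noncomputable def envelope {n : ℕ} (f : (Fin n → ℤ) → EReal)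
    (x : Fin n → ℝ) : EReal :=
  sInf { v : EReal | ∃ (t : Finset (Fin n → ℤ)) (lam : (Fin n → ℤ) → ℝ),
    (∀ z ∈ t, z ∈ intNbhd x) ∧ (∀ z ∈ t, 0 ≤ lam z) ∧
    (∑ z ∈ t, lam z) = 1 ∧
    (∀ i, (∑ z ∈ t, lam z * (z i : ℝ)) = x i) ∧
    v = ∑ z ∈ t, ((lam z : EReal) * f z) }

/-- `f` is integrally convex: its local convex envelope is convex on `ℝⁿ`. -/
def IntegrallyConvexFn {n : ℕ} (f : (Fin n → ℤ) → EReal) : Prop :=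
  ∀ (u v : Fin n → ℝ) (a b : ℝ), 0 ≤ a → 0 ≤ b → a + b = 1 →
    envelope f (a • u + b • v) ≤ (a : EReal) * envelope f u + (b : EReal) * envelope f v

section

variable {n : ℕ}

/-- `w` is a family of convex weights on `S` with barycenter `x`. -/
def IsWeight (S : Finset (Fin n → ℤ)) (x : Fin n → ℝ) (w : (Fin n → ℤ) → ℝ) : Prop :=
  (∀ z, 0 ≤ w z) ∧ (∀ z ∉ S, w z = 0) ∧ ∑ z ∈ S, w z = 1 ∧
    ∀ i, ∑ z ∈ S, w z * (z i : ℝ) = x i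

theorem sum_mul_eq_of_subset {S T : Finset (Fin n → ℤ)} {w : (Fin n → ℤ) → ℝ} (hST : S ⊆ T)
    (hw : ∀ z ∉ S, w z = 0) (φ : (Fin n → ℤ) → ℝ) :
    ∑ z ∈ T, w z * φ z = ∑ z ∈ S, w z * φ z :=
  (Finset.sum_subset hST fun z _ hz => by rw [hw z hz, zero_mul]).symm

theorem IsWeight.mono {S T : Finset (Fin n → ℤ)} {x : Fin n → ℝ} {w : (Fin n → ℤ) → ℝ}
    (h : IsWeight S x w) (hST : S ⊆ T) : IsWeight T x w := by
  obtain ⟨h0, hS, h1, hx⟩ := h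
  refine ⟨h0, fun z hz => hS z fun hz' => hz (hST hz'), ?_, fun i => ?_⟩
  · rw [← h1]
    exact (Finset.sum_subset hST fun z _ hz => hS z hz).symm
  · rw [← hx i]
    exact sum_mul_eq_of_subset hST hS fun z => (z i : ℝ)

theorem sum_combo_mul (S : Finset (Fin n → ℤ)) (a b : ℝ) (w₁ w₂ φ : (Fin n → ℤ) → ℝ) :
    ∑ z ∈ S, (a * w₁ z + b * w₂ z) * φ z =
      a * ∑ z ∈ S, w₁ z * φ z + b * ∑ z ∈ S, w₂ z * φ z := by
  rw [Finset.mul_sum, Finset.mul_sum, ← Finset.sum_add_distrib]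
  exact Finset.sum_congr rfl fun z _ => by ring

theorem IsWeight.combo {S : Finset (Fin n → ℤ)} {u v : Fin n → ℝ} {w₁ w₂ : (Fin n → ℤ) → ℝ}
    (h₁ : IsWeight S u w₁) (h₂ : IsWeight S v w₂) {a b : ℝ} (ha : 0 ≤ a) (hb : 0 ≤ b)
    (hab : a + b = 1) : IsWeight S (a • u + b • v) fun z => a * w₁ z + b * w₂ z := by
  refine ⟨fun z => add_nonneg (mul_nonneg ha (h₁.1 z)) (mul_nonneg hb (h₂.1 z)),
    fun z hz => by simp [h₁.2.1 z hz, h₂.2.1 z hz], ?_, fun i => ?_⟩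
  · rw [Finset.sum_add_distrib, ← Finset.mul_sum, ← Finset.mul_sum, h₁.2.2.1, h₂.2.2.1]
    linarith
  · rw [sum_combo_mul S a b w₁ w₂ fun z => (z i : ℝ), h₁.2.2.2 i, h₂.2.2.2 i]
    simp

theorem coe_sum_mul_toReal {f : (Fin n → ℤ) → EReal} (hf : ∀ x, f x ≠ ⊥)
    {S : Finset (Fin n → ℤ)} (hS : ∀ z ∈ S, f z ≠ ⊤) (w : (Fin n → ℤ) → ℝ) :
    ((∑ z ∈ S, w z * (f z).toReal : ℝ) : EReal) = ∑ z ∈ S, (w z : EReal) * f z := by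
  classical
  induction S using Finset.induction_on with
  | empty => simp
  | insert a S ha ih =>
    rw [Finset.sum_insert ha, Finset.sum_insert ha, EReal.coe_add, EReal.coe_mul,
      EReal.coe_toReal (hS a (Finset.mem_insert_self a S)) (hf a),
      ih fun z hz => hS z (Finset.mem_insert_of_mem hz)]

theorem envelope_le_of_isWeight {f : (Fin n → ℤ) → EReal} (hf : ∀ x, f x ≠ ⊥)
    {S : Finset (Fin n → ℤ)} {x : Fin n → ℝ} {w : (Fin n → ℤ) → ℝ} (h : IsWeight S x w)
    (hS : ∀ z ∈ S, f z ≠ ⊤) (hN : ∀ z ∈ S, w z ≠ 0 → z ∈ intNbhd x) :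
    envelope f x ≤ ((∑ z ∈ S, w z * (f z).toReal : ℝ) : EReal) := by
  classical
  have hsub : S.filter (fun z => w z ≠ 0) ⊆ S := Finset.filter_subset _ _
  have h0 : ∀ z ∉ S.filter (fun z => w z ≠ 0), w z = 0 := fun z hz => by
    by_contra hne
    exact hz (Finset.mem_filter.2 ⟨by_contra fun hzS => hne (h.2.1 z hzS), hne⟩)
  refine sInf_le ⟨S.filter fun z => w z ≠ 0, w, fun z hz => ?_, fun z _ => h.1 z, ?_,
    fun i => ?_, ?_⟩
  · exact hN z (Finset.mem_filter.1 hz).1 (Finset.mem_filter.1 hz).2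
  · rw [← h.2.2.1]
    exact Finset.sum_subset hsub fun z _ hz => h0 z hz
  · rw [← h.2.2.2 i]
    exact (sum_mul_eq_of_subset hsub h0 fun z => (z i : ℝ)).symm
  · rw [sum_mul_eq_of_subset hsub h0 fun z => (f z).toReal]
    exact coe_sum_mul_toReal hf (fun z hz => hS z (hsub hz)) w

theorem ereal_sum_ne_bot {ι : Type*} (s : Finset ι) (g : ι → EReal) (h : ∀ i ∈ s, g i ≠ ⊥) :
    ∑ i ∈ s, g i ≠ ⊥ := by
  classical
  induction s using Finset.induction_on with
  | empty => simp
  | insert a s ha ih =>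
    rw [Finset.sum_insert ha, Ne, EReal.add_eq_bot_iff, not_or]
    exact ⟨h a (Finset.mem_insert_self a s),
      ih fun i hi => h i (Finset.mem_insert_of_mem hi)⟩

theorem ereal_ne_top_of_sum_ne_top {ι : Type*} {s : Finset ι} {g : ι → EReal}
    (h : ∀ i ∈ s, g i ≠ ⊥) (hs : ∑ i ∈ s, g i ≠ ⊤) {i : ι} (hi : i ∈ s) : g i ≠ ⊤ := by
  classical
  intro htop
  apply hs
  rw [← Finset.add_sum_erase s g hi, htop]
  exact EReal.top_add_of_ne_bot
    (ereal_sum_ne_bot _ _ fun j hj => h j (Finset.mem_of_mem_erase hj))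

theorem coe_mul_ne_bot {a : ℝ} (ha : 0 ≤ a) {b : EReal} (hb : b ≠ ⊥) : (a : EReal) * b ≠ ⊥ := by
  rcases ha.eq_or_lt with rfl | ha
  · simp
  · induction b with
    | bot => exact absurd rfl hb
    | top => simp [EReal.coe_mul_top_of_pos ha]
    | coe b => exact_mod_cast EReal.coe_ne_bot (a * b)

theorem exists_isWeight_of_envelope_lt {f : (Fin n → ℤ) → EReal} (hf : ∀ x, f x ≠ ⊥)
    {x : Fin n → ℝ} {c : ℝ} (hc : envelope f x < c) :
    ∃ (S : Finset (Fin n → ℤ)) (w : (Fin n → ℤ) → ℝ), (∀ z ∈ S, f z ≠ ⊤) ∧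
      (∀ z ∈ S, z ∈ intNbhd x) ∧ IsWeight S x w ∧ ∑ z ∈ S, w z * (f z).toReal < c := by
  classical
  obtain ⟨_, ⟨t, lam, hN, h0, h1, hx, rfl⟩, hlt⟩ := sInf_lt_iff.1 hc
  have hbot : ∀ z ∈ t, (lam z : EReal) * f z ≠ ⊥ := fun z hz => coe_mul_ne_bot (h0 z hz) (hf z)
  have hfin : ∀ z ∈ t, 0 < lam z → f z ≠ ⊤ := fun z hz hpos htop =>
    ereal_ne_top_of_sum_ne_top hbot (hlt.trans (EReal.coe_lt_top c)).ne hz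
      (by rw [htop, EReal.coe_mul_top_of_pos hpos])
  have hsum : ∀ {M : Type} [AddCommMonoid M] (g : (Fin n → ℤ) → M),
      (∀ z ∈ t, lam z = 0 → g z = 0) →
      ∑ z ∈ t.filter (fun z => 0 < lam z), g z = ∑ z ∈ t, g z := fun g hg =>
    Finset.sum_subset (Finset.filter_subset _ _) fun z hz hz' => hg z hz <| by
      have : ¬ 0 < lam z := fun h => hz' (Finset.mem_filter.2 ⟨hz, h⟩)
      exact le_antisymm (not_lt.1 this) (h0 z hz)
  have hw : ∀ (g : (Fin n → ℤ) → ℝ), ∑ z ∈ t.filter (fun z => 0 < lam z),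
      (if z ∈ t.filter (fun z => 0 < lam z) then lam z else 0) * g z =
      ∑ z ∈ t.filter (fun z => 0 < lam z), lam z * g z := fun g =>
    Finset.sum_congr rfl fun z hz => by rw [if_pos hz]
  have hS : ∀ z ∈ t.filter (fun z => 0 < lam z), f z ≠ ⊤ := fun z hz =>
    hfin z (Finset.mem_filter.1 hz).1 (Finset.mem_filter.1 hz).2
  refine ⟨t.filter fun z => 0 < lam z,
    fun z => if z ∈ t.filter (fun z => 0 < lam z) then lam z else 0, hS,
    fun z hz => hN z (Finset.mem_filter.1 hz).1,
    ⟨fun z => ?_, fun z hz => if_neg hz, ?_, fun i => ?_⟩, ?_⟩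
  · dsimp only
    split_ifs with hz
    · exact (Finset.mem_filter.1 hz).2.le
    · exact le_rfl
  · have := hw fun _ => 1
    simp only [mul_one] at this
    rw [this, hsum lam fun _ _ h => h, h1]
  · rw [hw fun z => (z i : ℝ), hsum _ fun z _ h => by rw [h, zero_mul], hx i]
  · rw [hw, ← EReal.coe_lt_coe_iff, coe_sum_mul_toReal hf hS,
      hsum _ fun z _ h => by rw [h, EReal.coe_zero, zero_mul]]
    exact hlt

theorem intNbhd_subset_Icc (x : Fin n → ℝ) :
    intNbhd x ⊆ Set.Icc (fun i => ⌊x i⌋) fun i => ⌈x i⌉ := by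
  refine fun z hz => ⟨fun i => ?_, fun i => ?_⟩
  · have h := (abs_lt.1 (hz i)).2
    have h' := Int.floor_le (x i)
    have : ((⌊x i⌋ : ℤ) : ℝ) < ((z i + 1 : ℤ) : ℝ) := by push_cast; linarith
    exact Int.lt_add_one_iff.1 (by exact_mod_cast this)
  · have h := (abs_lt.1 (hz i)).1
    have h' := Int.le_ceil (x i)
    have : ((z i : ℤ) : ℝ) < ((⌈x i⌉ + 1 : ℤ) : ℝ) := by push_cast; linarith
    exact Int.lt_add_one_iff.1 (by exact_mod_cast this)

theorem envelope_ne_bot {f : (Fin n → ℤ) → EReal} (hf : ∀ x, f x ≠ ⊥) (x : Fin n → ℝ) :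
    envelope f x ≠ ⊥ := by
  obtain ⟨c, hc⟩ := (((Set.finite_Icc _ _).subset (intNbhd_subset_Icc x)).image
    fun z => (f z).toReal).bddBelow
  intro hbot
  obtain ⟨S, w, hS, hN, hw, hlt⟩ := exists_isWeight_of_envelope_lt hf (x := x) (c := c)
    (by rw [hbot]; exact EReal.bot_lt_coe c)
  refine hlt.not_ge ?_
  calc c = ∑ z ∈ S, w z * c := by rw [← Finset.sum_mul, hw.2.2.1, one_mul]
    _ ≤ _ := Finset.sum_le_sum fun z hz =>
      mul_le_mul_of_nonneg_left (hc ⟨z, hN z hz, rfl⟩) (hw.1 z)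

/-- A linear functional attains its minimum on the weights with a given barycenter. -/
theorem exists_isWeight_forall_le {S : Finset (Fin n → ℤ)} {x : Fin n → ℝ}
    {w₀ : (Fin n → ℤ) → ℝ} (h₀ : IsWeight S x w₀) (φ : (Fin n → ℤ) → ℝ) :
    ∃ w, IsWeight S x w ∧ ∀ w', IsWeight S x w' →
      ∑ z ∈ S, w z * φ z ≤ ∑ z ∈ S, w' z * φ z := by
  have hclosed : IsClosed {w | IsWeight S x w} := by
    simp only [IsWeight, Set.ofPred_and, Set.ofPred_forall]
    refine .inter (isClosed_iInter fun z => isClosed_le (by fun_prop) (by fun_prop)) <|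
      .inter (isClosed_iInter fun z => isClosed_iInter fun _ =>
        isClosed_eq (by fun_prop) (by fun_prop)) <|
      .inter (isClosed_eq (by fun_prop) (by fun_prop)) <|
      isClosed_iInter fun i => isClosed_eq (by fun_prop) (by fun_prop)
  have hcompact : IsCompact {w | IsWeight S x w} := by
    refine (isCompact_univ_pi fun _ : Fin n → ℤ => isCompact_Icc (a := (0 : ℝ)) (b := 1)
      ).of_isClosed_subset hclosed fun w hw z _ => ⟨hw.1 z, ?_⟩
    by_cases hz : z ∈ S
    · rw [← hw.2.2.1]
      exact Finset.single_le_sum (fun y _ => hw.1 y) hz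
    · rw [hw.2.1 z hz]
      exact zero_le_one
  obtain ⟨w, hw, hmin⟩ := hcompact.exists_isMinOn ⟨w₀, h₀⟩
    (f := fun w => ∑ z ∈ S, w z * φ z) (by fun_prop)
  exact ⟨w, hw, fun w' hw' => hmin hw'⟩

/-- The midpoint of two integer points. -/
noncomputable def midpt (y z : Fin n → ℤ) : Fin n → ℝ := fun i => ((y i : ℝ) + (z i : ℝ)) / 2

/-- At a minimizing weight, no pair of points of the support can be improved by redistributing
mass from the two points around their midpoint. -/
theorem IsWeight.midpt_le_of_isMin {S : Finset (Fin n → ℤ)} {x : Fin n → ℝ}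
    {w φ : (Fin n → ℤ) → ℝ} (hw : IsWeight S x w)
    (hmin : ∀ w', IsWeight S x w' → ∑ z ∈ S, w z * φ z ≤ ∑ z ∈ S, w' z * φ z)
    {y z : Fin n → ℤ} (hyS : y ∈ S) (hzS : z ∈ S) (hy : 0 < w y) (hz : 0 < w z) (hyz : y ≠ z)
    {μ : (Fin n → ℤ) → ℝ} (hμ : IsWeight S (midpt y z) μ) :
    (φ y + φ z) / 2 ≤ ∑ u ∈ S, μ u * φ u := by
  classical
  obtain ⟨ε, hε, hεy, hεz⟩ : ∃ ε : ℝ, 0 < ε ∧ ε ≤ w y ∧ ε ≤ w z :=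
    ⟨min (w y) (w z), lt_min hy hz, min_le_left _ _, min_le_right _ _⟩
  set w' : (Fin n → ℤ) → ℝ := fun u =>
    w u + ε * (2 * μ u - (if u = y then 1 else 0) - (if u = z then 1 else 0)) with hw'
  have hsum : ∀ ψ : (Fin n → ℤ) → ℝ, ∑ u ∈ S, w' u * ψ u =
      ∑ u ∈ S, w u * ψ u + ε * (2 * ∑ u ∈ S, μ u * ψ u - ψ y - ψ z) := fun ψ => by
    have hy' : ∑ u ∈ S, (if u = y then 1 else 0) * ψ u = ψ y := by simp [hyS]
    have hz' : ∑ u ∈ S, (if u = z then 1 else 0) * ψ u = ψ z := by simp [hzS]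
    rw [← hy', ← hz', Finset.mul_sum, ← Finset.sum_sub_distrib, ← Finset.sum_sub_distrib,
      Finset.mul_sum, ← Finset.sum_add_distrib]
    exact Finset.sum_congr rfl fun u _ => by simp only [hw']; ring
  have hweight : IsWeight S x w' := by
    refine ⟨fun u => ?_, fun u hu => ?_, ?_, fun i => ?_⟩
    · have h1 := mul_nonneg hε.le (hμ.1 u)
      have h2 := hw.1 u
      simp only [hw']
      split_ifs with huy huz huz
      · exact absurd (huy.symm.trans huz) hyz
      · subst huy; linarith
      · subst huz; linarith
      · linarith
    · have huy : u ≠ y := fun h => hu (h ▸ hyS)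
      have huz : u ≠ z := fun h => hu (h ▸ hzS)
      simp [hw', hw.2.1 u hu, hμ.2.1 u hu, huy, huz]
    · have := hsum fun _ => 1
      simp only [mul_one] at this
      rw [this, hw.2.2.1, hμ.2.2.1]
      ring
    · rw [hsum fun u => (u i : ℝ), hw.2.2.2 i, hμ.2.2.2 i, midpt]
      ring
  have h := hmin w' hweight
  rw [hsum] at h
  have h' : 0 ≤ ε * (2 * ∑ u ∈ S, μ u * φ u - φ y - φ z) := by linarith
  have := nonneg_of_mul_nonneg_right h' hε
  linarith

/-- The squared Euclidean norm of an integer vector. -/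
def sqNorm (z : Fin n → ℤ) : ℝ := ∑ i, (z i : ℝ) ^ 2

theorem two_le_linf_iff (z : Fin n → ℤ) : 2 ≤ linf z ↔ ∃ i, 2 ≤ (z i).natAbs := by
  simp [linf, Finset.le_sup_iff (show (⊥ : ℕ) < 2 by decide)]

theorem two_mul_sub_of_mem_intNbhd_midpt {y z u : Fin n → ℤ} (hu : u ∈ intNbhd (midpt y z))
    (i : Fin n) : y i + z i - 2 < 2 * u i ∧ 2 * u i < y i + z i + 2 := by
  have h := abs_lt.1 (hu i)
  simp only [midpt] at h
  constructor
  · have : ((y i + z i - 2 : ℤ) : ℝ) < ((2 * u i : ℤ) : ℝ) := by push_cast; linarith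
    exact_mod_cast this
  · have : ((2 * u i : ℤ) : ℝ) < ((y i + z i + 2 : ℤ) : ℝ) := by push_cast; linarith
    exact_mod_cast this

theorem sum_sub_mul_sub_le {y z u : Fin n → ℤ} (hyz : 2 ≤ linf (y - z))
    (hu : u ∈ intNbhd (midpt y z)) : ∑ i, (u i - y i) * (u i - z i) ≤ -1 := by
  have hle : ∀ i, (u i - y i) * (u i - z i) ≤ 0 := fun i => by
    obtain ⟨h1, h2⟩ := two_mul_sub_of_mem_intNbhd_midpt hu i
    rcases le_total (y i) (z i) with h | h
    · exact mul_nonpos_of_nonneg_of_nonpos (by omega) (by omega)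
    · exact mul_nonpos_of_nonpos_of_nonneg (by omega) (by omega)
  obtain ⟨j, hj⟩ := (two_le_linf_iff _).1 hyz
  rw [Pi.sub_apply] at hj
  have hlt : (u j - y j) * (u j - z j) < 0 := by
    obtain ⟨h1, h2⟩ := two_mul_sub_of_mem_intNbhd_midpt hu j
    rcases le_total (y j) (z j) with h | h
    · exact mul_neg_of_pos_of_neg (by omega) (by omega)
    · exact mul_neg_of_neg_of_pos (by omega) (by omega)
  have := Finset.sum_lt_sum (fun i _ => hle i) ⟨j, Finset.mem_univ j, hlt⟩
  rw [Finset.sum_const_zero] at this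
  omega

theorem IsWeight.sum_sqNorm_le {S : Finset (Fin n → ℤ)} {y z : Fin n → ℤ}
    {μ : (Fin n → ℤ) → ℝ} (hμ : IsWeight S (midpt y z) μ) (hN : ∀ u ∈ S, u ∈ intNbhd (midpt y z))
    (hyz : 2 ≤ linf (y - z)) :
    ∑ u ∈ S, μ u * sqNorm u ≤ (sqNorm y + sqNorm z) / 2 - 1 := by
  have hpt : ∀ u ∈ S,
      sqNorm u ≤ ∑ i, (((y i : ℝ) + z i) * u i - (y i : ℝ) * z i) - 1 := fun u hu => by
    have h := sum_sub_mul_sub_le hyz (hN u hu)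
    have h' : ∑ i, ((u i : ℝ) - y i) * ((u i : ℝ) - z i) ≤ -1 := by exact_mod_cast h
    have h'' : ∑ i, ((u i : ℝ) - y i) * ((u i : ℝ) - z i) =
        sqNorm u - ∑ i, (((y i : ℝ) + z i) * u i - (y i : ℝ) * z i) := by
      rw [sqNorm, ← Finset.sum_sub_distrib]
      exact Finset.sum_congr rfl fun i _ => by ring
    linarith
  calc ∑ u ∈ S, μ u * sqNorm u
      ≤ ∑ u ∈ S, μ u * (∑ i, (((y i : ℝ) + z i) * u i - (y i : ℝ) * z i) - 1) :=
        Finset.sum_le_sum fun u hu => mul_le_mul_of_nonneg_left (hpt u hu) (hμ.1 u)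
    _ = ∑ i, (((y i : ℝ) + z i) * midpt y z i - (y i : ℝ) * z i) - 1 := by
        simp only [mul_sub _ _ (1 : ℝ), mul_one]
        rw [Finset.sum_sub_distrib, hμ.2.2.1]
        simp only [Finset.mul_sum]
        rw [Finset.sum_comm]
        congr 1
        refine Finset.sum_congr rfl fun i _ => ?_
        calc ∑ u ∈ S, μ u * (((y i : ℝ) + z i) * u i - (y i : ℝ) * z i)
            = ((y i : ℝ) + z i) * ∑ u ∈ S, μ u * (u i : ℝ) -
                (∑ u ∈ S, μ u) * ((y i : ℝ) * z i) := by
              rw [Finset.mul_sum, Finset.sum_mul, ← Finset.sum_sub_distrib]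
              exact Finset.sum_congr rfl fun u _ => by ring
          _ = _ := by rw [hμ.2.2.2 i, hμ.2.2.1, one_mul]
    _ = (sqNorm y + sqNorm z) / 2 - 1 := by
        rw [sqNorm, sqNorm, ← Finset.sum_add_distrib, Finset.sum_div]
        congr 1
        exact Finset.sum_congr rfl fun i _ => by rw [midpt]; ring

theorem mem_Icc_of_mem_intNbhd_midpt {l h y z u : Fin n → ℤ} (hy : y ∈ Finset.Icc l h)
    (hz : z ∈ Finset.Icc l h) (hu : u ∈ intNbhd (midpt y z)) : u ∈ Finset.Icc l h := by
  rw [Finset.mem_Icc] at *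
  refine ⟨fun i => ?_, fun i => ?_⟩
  · change l i ≤ u i
    have := two_mul_sub_of_mem_intNbhd_midpt hu i
    have : l i ≤ y i := hy.1 i
    have : l i ≤ z i := hz.1 i
    omega
  · change u i ≤ h i
    have := two_mul_sub_of_mem_intNbhd_midpt hu i
    have : y i ≤ h i := hy.2 i
    have : z i ≤ h i := hz.2 i
    omega

/-- If the points carrying mass are pairwise at ℓ∞-distance at most one, they all lie in the
integral neighborhood of the barycenter. -/
theorem IsWeight.mem_intNbhd {S : Finset (Fin n → ℤ)} {x : Fin n → ℝ} {w : (Fin n → ℤ) → ℝ}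
    (hw : IsWeight S x w)
    (hclose : ∀ y ∈ S, ∀ z ∈ S, 0 < w y → 0 < w z → ¬ 2 ≤ linf (y - z))
    {z : Fin n → ℤ} (hz : z ∈ S) (hwz : 0 < w z) : z ∈ intNbhd x := by
  intro i
  have hx : x i - z i = ∑ u ∈ S, w u * ((u i : ℝ) - z i) := by
    simp only [mul_sub, Finset.sum_sub_distrib]
    rw [hw.2.2.2 i, ← Finset.sum_mul, hw.2.2.1, one_mul]
  rw [hx]
  calc |∑ u ∈ S, w u * ((u i : ℝ) - z i)| ≤ ∑ u ∈ S, |w u * ((u i : ℝ) - z i)| :=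
        Finset.abs_sum_le_sum_abs _ _
    _ < ∑ u ∈ S, w u := by
        refine Finset.sum_lt_sum (fun u hu => ?_) ⟨z, hz, by simpa using hwz⟩
        rcases (hw.1 u).eq_or_lt with h0 | hpos
        · simp [← h0]
        · have h := hclose u hu z hz hpos hwz
          rw [two_le_linf_iff, not_exists] at h
          have h := h i
          rw [Pi.sub_apply] at h
          have habs : |u i - z i| ≤ 1 := abs_le.2 ⟨by omega, by omega⟩
          have habs' : |(u i : ℝ) - z i| ≤ 1 := by exact_mod_cast habs
          rw [abs_mul, abs_of_pos hpos]
          exact mul_le_of_le_one_right hpos.le habs'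
    _ = 1 := hw.2.2.1

/-- Weak discrete midpoint convexity of `f`. -/
def WeakDMC (f : (Fin n → ℤ) → EReal) : Prop :=
  ∀ x y : Fin n → ℤ, x ∈ effDom f → y ∈ effDom f → 2 ≤ linf (x - y) →
    (2 : EReal) * envelope f (midpt x y) ≤ f x + f y

theorem WeakDMC.envelope_midpt_lt {f : (Fin n → ℤ) → EReal} (hf : ∀ x, f x ≠ ⊥)
    (h : WeakDMC f) {y z : Fin n → ℤ} (hy : f y ≠ ⊤) (hz : f z ≠ ⊤) (hyz : 2 ≤ linf (y - z))
    {δ : ℝ} (hδ : 0 < δ) :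
    envelope f (midpt y z) < (((f y).toReal + (f z).toReal) / 2 + δ : ℝ) := by
  have htwo : (2 : EReal) = ((2 : ℝ) : EReal) := rfl
  have hle := h y z hy hz hyz
  rw [← EReal.coe_toReal hy (hf y), ← EReal.coe_toReal hz (hf z), ← EReal.coe_add] at hle
  generalize hE : envelope f (midpt y z) = E at *
  induction E with
  | bot => exact EReal.bot_lt_coe _
  | top =>
    exfalso
    rw [EReal.mul_top_of_pos (by norm_num)] at hle
    exact EReal.coe_ne_top _ (top_le_iff.1 hle)
  | coe E =>
    have : 2 * E ≤ (f y).toReal + (f z).toReal := by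
      rw [htwo] at hle
      exact_mod_cast hle
    exact_mod_cast (by linarith : E < _)

/-- Under weak discrete midpoint convexity, the local convex envelope at a point is bounded by
every finite convex combination representing that point. -/
theorem WeakDMC.envelope_le {f : (Fin n → ℤ) → EReal} (hf : ∀ x, f x ≠ ⊥) (h : WeakDMC f)
    {S : Finset (Fin n → ℤ)} (hS : ∀ z ∈ S, f z ≠ ⊤) {x : Fin n → ℝ} {w₀ : (Fin n → ℤ) → ℝ}
    (hw₀ : IsWeight S x w₀) :
    envelope f x ≤ ((∑ z ∈ S, w₀ z * (f z).toReal : ℝ) : EReal) := by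
  classical
  obtain ⟨l, hl⟩ := S.finite_toSet.bddBelow
  obtain ⟨u, hu⟩ := S.finite_toSet.bddAbove
  set T : Finset (Fin n → ℤ) := (Finset.Icc l u).filter fun z => f z ≠ ⊤
  have hST : S ⊆ T := fun z hz =>
    Finset.mem_filter.2 ⟨Finset.mem_Icc.2 ⟨hl hz, hu hz⟩, hS z hz⟩
  have hT : ∀ z ∈ T, f z ≠ ⊤ := fun z hz => (Finset.mem_filter.1 hz).2
  have hbound : ∀ δ : ℝ, 0 < δ → envelope f x ≤
      ((∑ z ∈ S, w₀ z * (f z).toReal + δ * ∑ z ∈ S, w₀ z * sqNorm z : ℝ) : EReal) := by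
    intro δ hδ
    have hsplit : ∀ (U : Finset (Fin n → ℤ)) (w : (Fin n → ℤ) → ℝ),
        ∑ z ∈ U, w z * ((f z).toReal + δ * sqNorm z) =
          ∑ z ∈ U, w z * (f z).toReal + δ * ∑ z ∈ U, w z * sqNorm z := fun U w => by
      rw [Finset.mul_sum, ← Finset.sum_add_distrib]
      exact Finset.sum_congr rfl fun z _ => by ring
    obtain ⟨w, hw, hmin⟩ := exists_isWeight_forall_le (hw₀.mono hST)
      fun z => (f z).toReal + δ * sqNorm z
    have hclose : ∀ y ∈ T, ∀ z ∈ T, 0 < w y → 0 < w z → ¬ 2 ≤ linf (y - z) := by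
      intro y hy z hz hwy hwz hyz
      obtain ⟨U, μ, hU, hN, hμ, hlt⟩ := exists_isWeight_of_envelope_lt hf
        (h.envelope_midpt_lt hf (hT y hy) (hT z hz) hyz hδ)
      have hUT : U ⊆ T := fun v hv => Finset.mem_filter.2
        ⟨mem_Icc_of_mem_intNbhd_midpt (Finset.mem_filter.1 hy).1 (Finset.mem_filter.1 hz).1
          (hN v hv), hU v hv⟩
      have hne : y ≠ z := by
        rintro rfl
        simp [two_le_linf_iff] at hyz
      have hge := hw.midpt_le_of_isMin hmin hy hz hwy hwz hne (hμ.mono hUT)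
      rw [sum_mul_eq_of_subset hUT hμ.2.1, hsplit] at hge
      have := mul_le_mul_of_nonneg_left (hμ.sum_sqNorm_le hN hyz) hδ.le
      linarith
    refine (envelope_le_of_isWeight hf hw hT fun z hz hne =>
      hw.mem_intNbhd hclose hz ((hw.1 z).lt_of_ne' hne)).trans (EReal.coe_le_coe_iff.2 ?_)
    have hle := hmin w₀ (hw₀.mono hST)
    rw [sum_mul_eq_of_subset hST hw₀.2.1, hsplit, hsplit] at hle
    have : 0 ≤ δ * ∑ z ∈ T, w z * sqNorm z := mul_nonneg hδ.le <|
      Finset.sum_nonneg fun z _ => mul_nonneg (hw.1 z) (Finset.sum_nonneg fun i _ => sq_nonneg _)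
    linarith
  set V := ∑ z ∈ S, w₀ z * (f z).toReal
  set C := ∑ z ∈ S, w₀ z * sqNorm z
  have hC : 0 ≤ C :=
    Finset.sum_nonneg fun z _ => mul_nonneg (hw₀.1 z) (Finset.sum_nonneg fun i _ => sq_nonneg _)
  refine EReal.le_of_forall_lt_iff_le.1 fun c hc => ?_
  have hVc : V < c := EReal.coe_lt_coe_iff.1 hc
  have hδ : 0 < (c - V) / (C + 1) := div_pos (sub_pos.2 hVc) (by linarith)
  refine (hbound _ hδ).trans (EReal.coe_le_coe_iff.2 ?_)
  have : (c - V) / (C + 1) * (C + 1) = c - V := div_mul_cancel₀ _ (by linarith)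
  nlinarith

theorem WeakDMC.integrallyConvexFn {f : (Fin n → ℤ) → EReal} (hf : ∀ x, f x ≠ ⊥)
    (h : WeakDMC f) : IntegrallyConvexFn f := by
  classical
  intro u v a b ha hb hab
  rcases ha.eq_or_lt with rfl | ha'
  · obtain rfl : b = 1 := by linarith
    simp
  rcases hb.eq_or_lt with rfl | hb'
  · obtain rfl : a = 1 := by linarith
    simp
  have key : ∀ A B : ℝ, envelope f u < A → envelope f v < B →
      envelope f (a • u + b • v) ≤ ((a * A + b * B : ℝ) : EReal) := by
    intro A B hA hB
    obtain ⟨S₁, w₁, hS₁, -, hw₁, hlt₁⟩ := exists_isWeight_of_envelope_lt hf hA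
    obtain ⟨S₂, w₂, hS₂, -, hw₂, hlt₂⟩ := exists_isWeight_of_envelope_lt hf hB
    have h₁ : S₁ ⊆ S₁ ∪ S₂ := Finset.subset_union_left
    have h₂ : S₂ ⊆ S₁ ∪ S₂ := Finset.subset_union_right
    refine (h.envelope_le hf (fun z hz => (Finset.mem_union.1 hz).elim (hS₁ z) (hS₂ z))
      ((hw₁.mono h₁).combo (hw₂.mono h₂) ha hb hab)).trans (EReal.coe_le_coe_iff.2 ?_)
    rw [sum_combo_mul, sum_mul_eq_of_subset h₁ hw₁.2.1, sum_mul_eq_of_subset h₂ hw₂.2.1]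
    exact add_le_add (mul_le_mul_of_nonneg_left hlt₁.le ha)
      (mul_le_mul_of_nonneg_left hlt₂.le hb)
  by_cases hu : envelope f u = ⊤
  · rw [hu, EReal.coe_mul_top_of_pos ha',
      EReal.top_add_of_ne_bot (coe_mul_ne_bot hb (envelope_ne_bot hf v))]
    exact le_top
  by_cases hv : envelope f v = ⊤
  · rw [hv, EReal.coe_mul_top_of_pos hb',
      EReal.add_top_of_ne_bot (coe_mul_ne_bot ha (envelope_ne_bot hf u))]
    exact le_top
  lift envelope f u to ℝ using ⟨hu, envelope_ne_bot hf u⟩ with U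
  lift envelope f v to ℝ using ⟨hv, envelope_ne_bot hf v⟩ with V
  rw [← EReal.coe_mul, ← EReal.coe_mul, ← EReal.coe_add]
  refine EReal.le_of_forall_lt_iff_le.1 fun c hc => ?_
  have hc' : a * U + b * V < c := EReal.coe_lt_coe_iff.1 hc
  refine (key (U + (c - (a * U + b * V))) (V + (c - (a * U + b * V)))
    (EReal.coe_lt_coe_iff.2 (by linarith)) (EReal.coe_lt_coe_iff.2 (by linarith))).trans
    (EReal.coe_le_coe_iff.2 (le_of_eq ?_))
  linear_combination (c - (a * U + b * V)) * hab

theorem envelope_intCast_le {f : (Fin n → ℤ) → EReal} (x : Fin n → ℤ) :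
    envelope f (fun i => (x i : ℝ)) ≤ f x :=
  sInf_le ⟨{x}, fun _ => 1, by simp [intNbhd], by simp, by simp, by simp, by simp⟩

theorem IntegrallyConvexFn.weakDMC {f : (Fin n → ℤ) → EReal} (hf : ∀ x, f x ≠ ⊥)
    (h : IntegrallyConvexFn f) : WeakDMC f := by
  intro x y hx hy _
  have hmid : midpt x y =
      (1 / 2 : ℝ) • (fun i => (x i : ℝ)) + (1 / 2 : ℝ) • fun i => (y i : ℝ) := by
    ext i
    simp only [midpt, Pi.add_apply, Pi.smul_apply, smul_eq_mul]
    ring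
  have hle : envelope f (midpt x y) ≤
      ((1 / 2 : ℝ) : EReal) * f x + ((1 / 2 : ℝ) : EReal) * f y := by
    rw [hmid]
    have h2 : (0 : EReal) ≤ ((1 / 2 : ℝ) : EReal) := EReal.coe_nonneg.2 (by norm_num)
    exact (h _ _ (1 / 2) (1 / 2) (by norm_num) (by norm_num) (by norm_num)).trans
      (add_le_add (mul_le_mul_of_nonneg_left (envelope_intCast_le x) h2)
        (mul_le_mul_of_nonneg_left (envelope_intCast_le y) h2))
  refine (mul_le_mul_of_nonneg_left hle (by norm_num)).trans ?_
  rw [← EReal.coe_toReal hx (hf x), ← EReal.coe_toReal hy (hf y)]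
  have : (2 : ℝ) * (1 / 2 * (f x).toReal + 1 / 2 * (f y).toReal) ≤
      (f x).toReal + (f y).toReal := by linarith
  have htwo : (2 : EReal) = ((2 : ℝ) : EReal) := rfl
  rw [htwo]
  exact_mod_cast this

end

/-- A function `f : ℤⁿ → ℝ ∪ {+∞}` is integrally convex if and only if it
satisfies weak discrete midpoint convexity
`f(x) + f(y) ≥ 2·f̃((x+y)/2)` for all `x, y ∈ dom f` with `‖x − y‖∞ ≥ 2`. -/
theorem integrallyConvex_iff_global_weakDMC {n : ℕ}
    (f : (Fin n → ℤ) → EReal) (hf : ∀ x, f x ≠ ⊥) :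
    IntegrallyConvexFn f ↔
      ∀ x y : Fin n → ℤ, x ∈ effDom f → y ∈ effDom f → 2 ≤ linf (x - y) →
        (2 : EReal) * envelope f (fun i => ((x i : ℝ) + (y i : ℝ)) / 2) ≤
          f x + f y := by
  exact ⟨fun h => h.weakDMC hf, fun h => WeakDMC.integrallyConvexFn hf h⟩
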